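/- arXiv:2212.04121 — 2 statements merged into one kernel-verified Lean document; each statement's English description precedes it below -/
import Mathlib

section
/- For t = 2/3, the squares S^t_n of side length n^{-t} for n = 1, 2, 3, ... can be packed perfectly into the rectangle of dimensions ζ(2t) × 1. That is, there exist positions (x_n, y_n) ∈ ℝ² for each positive integer n such that each axis-parallel square [x_n, x_n + n^{-2/3}] × [y_n, y_n + n^{-2/3}] is contained in the rectangle [0, ζ(4/3)] × [0, 1], and the interiors of distinct squares are pairwise disjoint. (The packing is perfect since the total area ∑_{n=1}^∞ n^{-4/3} = ζ(4/3) equals the area of the rectangle.) -/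
/-- The real zeta function as the series `∑_{i=1}^∞ i^{-s}` (for `s > 1`). -/
noncomputable def zetaR (s : ℝ) : ℝ := ∑' n : ℕ+, (n : ℝ) ^ (-s)

/-!
The free space left after each square is kept as a list of strips, rectangles with a marked
direction; `length` is the extent in that direction and `width` the extent across it. Cutting a
square of side `a` off a corner of a strip `l × w` leaves a strip of length `a` (the end piece,
marked across) and a strip of length `l` (the side piece, marked along), so the total length of
the strips grows by exactly `a`, and every strip stays at least as long as the next, smaller square.
The process can only stop when all strips are narrower than the next side `a`, and this is
impossible as long as the free area is at least `a` times the total length of the strips. For the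
sides `k ^ (-t)` both quantities are estimated by integrals: at `a = n ^ (-t)` the free area is at
least `n ^ (1 - 2 * t) / (2 * t - 1)`, the product at most `n ^ (1 - 2 * t) / (1 - t)`, and
`2 * t - 1 ≤ 1 - t` for `t ≤ 2 / 3`.
-/

namespace SquarePacking

open Set Function

/-- The closed axis-parallel rectangle with lower left corner `(x, y)`, width `w`, height `h`. -/
def rect (x y w h : ℝ) : Set (ℝ × ℝ) := Icc x (x + w) ×ˢ Icc y (y + h)

lemma interior_rect (x y w h : ℝ) :
    interior (rect x y w h) = Ioo x (x + w) ×ˢ Ioo y (y + h) := by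
  rw [rect, interior_prod_eq, interior_Icc, interior_Icc]

section Rect

variable {x y w h x' y' w' h' : ℝ}

lemma rect_subset_rect (hx : x' ≤ x) (hw : x + w ≤ x' + w') (hy : y' ≤ y)
    (hh : y + h ≤ y' + h') : rect x y w h ⊆ rect x' y' w' h' :=
  prod_mono (Icc_subset_Icc hx hw) (Icc_subset_Icc hy hh)

lemma disjoint_interior_rect_of_add_le_left (hx : x + w ≤ x') :
    Disjoint (interior (rect x y w h)) (interior (rect x' y' w' h')) := by
  simp only [interior_rect]
  exact disjoint_prod.2 (.inl (Ioo_disjoint_Ioo.2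
    ((min_le_left _ _).trans (hx.trans (le_max_right _ _)))))

lemma disjoint_interior_rect_of_add_le_bottom (hy : y + h ≤ y') :
    Disjoint (interior (rect x y w h)) (interior (rect x' y' w' h')) := by
  simp only [interior_rect]
  exact disjoint_prod.2 (.inr (Ioo_disjoint_Ioo.2
    ((min_le_left _ _).trans (hy.trans (le_max_right _ _)))))

end Rect

/-- A rectangle with lower left corner `(x, y)` and a marked direction: `length` is the extent in
the marked direction, which is the horizontal one if `horizontal` is true, and `width` is the
extent across it. -/
structure Strip where
  x : ℝ
  y : ℝ
  length : ℝ
  width : ℝ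
  horizontal : Bool

namespace Strip

/-- The closed rectangle occupied by a strip. -/
def toSet (c : Strip) : Set (ℝ × ℝ) :=
  if c.horizontal then rect c.x c.y c.length c.width else rect c.x c.y c.width c.length

/-- The square of side `a` at the lower left corner of a strip. -/
def cornerSquare (c : Strip) (a : ℝ) : Set (ℝ × ℝ) := rect c.x c.y a a

/-- The part of a strip lying beyond its corner square of side `a` in the marked direction. It is
marked in the other direction, so its length is `a`. -/
def endPiece (c : Strip) (a : ℝ) : Strip where
  x := if c.horizontal then c.x + a else c.x
  y := if c.horizontal then c.y else c.y + a
  length := a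
  width := c.length - a
  horizontal := !c.horizontal

/-- The part of a strip left after removing a slab of width `a`, which consists of the corner square
and the end piece. It is marked in the same direction, so it has the length of the whole strip. -/
def sidePiece (c : Strip) (a : ℝ) : Strip where
  x := if c.horizontal then c.x else c.x + a
  y := if c.horizontal then c.y + a else c.y
  length := c.length
  width := c.width - a
  horizontal := c.horizontal

variable {c : Strip} {a : ℝ}

lemma cornerSquare_subset (hl : a ≤ c.length) (hw : a ≤ c.width) :
    c.cornerSquare a ⊆ c.toSet := by
  obtain ⟨x, y, l, w, _ | _⟩ := c <;> apply rect_subset_rect <;> simp_all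

lemma endPiece_subset (ha : 0 ≤ a) (hw : a ≤ c.width) : (c.endPiece a).toSet ⊆ c.toSet := by
  obtain ⟨x, y, l, w, _ | _⟩ := c <;> apply rect_subset_rect <;> simp_all [endPiece]

lemma sidePiece_subset (ha : 0 ≤ a) : (c.sidePiece a).toSet ⊆ c.toSet := by
  obtain ⟨x, y, l, w, _ | _⟩ := c <;> apply rect_subset_rect <;> simp_all [sidePiece]

lemma disjoint_cornerSquare_endPiece (c : Strip) (a : ℝ) :
    Disjoint (interior (c.cornerSquare a)) (interior (c.endPiece a).toSet) := by
  obtain ⟨x, y, l, w, _ | _⟩ := c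
  · exact disjoint_interior_rect_of_add_le_bottom le_rfl
  · exact disjoint_interior_rect_of_add_le_left le_rfl

lemma disjoint_cornerSquare_sidePiece (c : Strip) (a : ℝ) :
    Disjoint (interior (c.cornerSquare a)) (interior (c.sidePiece a).toSet) := by
  obtain ⟨x, y, l, w, _ | _⟩ := c
  · exact disjoint_interior_rect_of_add_le_left le_rfl
  · exact disjoint_interior_rect_of_add_le_bottom le_rfl

lemma disjoint_endPiece_sidePiece (c : Strip) (a : ℝ) :
    Disjoint (interior (c.endPiece a).toSet) (interior (c.sidePiece a).toSet) := by
  obtain ⟨x, y, l, w, _ | _⟩ := c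
  · exact disjoint_interior_rect_of_add_le_left le_rfl
  · exact disjoint_interior_rect_of_add_le_bottom le_rfl

end Strip

/-- The union of the interiors of the strips in a list. -/
def openUnion (L : List Strip) : Set (ℝ × ℝ) := ⋃ c ∈ L, interior c.toSet

lemma openUnion_cons (c : Strip) (L : List Strip) :
    openUnion (c :: L) = interior c.toSet ∪ openUnion L := by
  simp [openUnion, iUnion_or, iUnion_union_distrib]

lemma openUnion_perm {L L' : List Strip} (h : L.Perm L') : openUnion L = openUnion L' := by
  simp only [openUnion, h.mem_iff]

lemma disjoint_openUnion_right {U : Set (ℝ × ℝ)} {L : List Strip} :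
    Disjoint U (openUnion L) ↔ ∀ c ∈ L, Disjoint U (interior c.toSet) := by
  simp only [openUnion, disjoint_iUnion_right]

lemma openUnion_cut_subset {c : Strip} {a : ℝ} {M : List Strip} (ha : 0 ≤ a)
    (hw : a ≤ c.width) :
    openUnion (c.endPiece a :: c.sidePiece a :: M) ⊆ openUnion (c :: M) := by
  simp only [openUnion_cons, ← union_assoc]
  exact union_subset_union_left _ (union_subset (interior_mono (c.endPiece_subset ha hw))
    (interior_mono (c.sidePiece_subset ha)))

/-- The list `L` consists of non-overlapping strips inside `F`, each of length at least `a`, with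
total area `A` and total length `ℓ`. -/
structure IsStripFamily (F : Set (ℝ × ℝ)) (a A ℓ : ℝ) (L : List Strip) : Prop where
  subset : ∀ c ∈ L, c.toSet ⊆ F
  le_length : ∀ c ∈ L, a ≤ c.length
  pairwise : L.Pairwise (Disjoint on fun c => interior c.toSet)
  sum_area : (L.map fun c => c.width * c.length).sum = A
  sum_length : (L.map Strip.length).sum = ℓ

namespace IsStripFamily

variable {F : Set (ℝ × ℝ)} {a b A ℓ : ℝ} {c : Strip} {L L' M : List Strip}

lemma perm (h : IsStripFamily F a A ℓ L) (hL : L.Perm L') : IsStripFamily F a A ℓ L' where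
  subset c hc := h.subset c (hL.mem_iff.2 hc)
  le_length c hc := h.le_length c (hL.mem_iff.2 hc)
  pairwise := (hL.pairwise_iff fun hcd => hcd.symm).1 h.pairwise
  sum_area := (hL.map _).sum_eq.symm.trans h.sum_area
  sum_length := (hL.map _).sum_eq.symm.trans h.sum_length

lemma exists_le_width (h : IsStripFamily F a A ℓ L) (ha : 0 < a) (hℓ : ℓ ≠ 0) (hA : a * ℓ ≤ A) :
    ∃ c ∈ L, a ≤ c.width := by
  have hne : L ≠ [] := by
    rintro rfl
    exact hℓ h.sum_length.symm
  rw [← h.sum_area, ← h.sum_length, ← List.sum_map_mul_left] at hA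
  obtain ⟨c, hc, hle⟩ := List.exists_le_of_sum_le hne _ _ hA
  exact ⟨c, hc, le_of_mul_le_mul_right hle (ha.trans_le (h.le_length c hc))⟩

lemma cut (h : IsStripFamily F a A ℓ (c :: M)) (ha : 0 ≤ a) (hw : a ≤ c.width) (hb : b ≤ a) :
    IsStripFamily F b (A - a ^ 2) (ℓ + a) (c.endPiece a :: c.sidePiece a :: M) := by
  obtain ⟨hcF, hMF⟩ := List.forall_mem_cons.1 h.subset
  obtain ⟨hcl, hMl⟩ := List.forall_mem_cons.1 h.le_length
  obtain ⟨hcM, hM⟩ := List.pairwise_cons.1 h.pairwise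
  have hend := c.endPiece_subset ha hw
  have hside := c.sidePiece_subset ha
  have harea := h.sum_area
  have hlength := h.sum_length
  rw [List.map_cons, List.sum_cons] at harea hlength
  constructor
  · simp only [List.forall_mem_cons]
    exact ⟨hend.trans hcF, hside.trans hcF, hMF⟩
  · simp only [List.forall_mem_cons]
    exact ⟨hb, hb.trans hcl, fun d hd => hb.trans (hMl d hd)⟩
  · simp only [List.pairwise_cons, List.forall_mem_cons]
    exact ⟨⟨c.disjoint_endPiece_sidePiece a,
      fun d hd => (hcM d hd).mono_left (interior_mono hend)⟩,
      fun d hd => (hcM d hd).mono_left (interior_mono hside), hM⟩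
  · simp only [List.map_cons, List.sum_cons, Strip.endPiece, Strip.sidePiece]
    linarith
  · simp only [List.map_cons, List.sum_cons, Strip.endPiece, Strip.sidePiece]
    linarith

lemma disjoint_cornerSquare_openUnion (h : IsStripFamily F a A ℓ (c :: M)) (hw : a ≤ c.width) :
    Disjoint (interior (c.cornerSquare a))
      (openUnion (c.endPiece a :: c.sidePiece a :: M)) := by
  have hsq := c.cornerSquare_subset (h.le_length c List.mem_cons_self) hw
  simp only [disjoint_openUnion_right, List.forall_mem_cons]
  exact ⟨c.disjoint_cornerSquare_endPiece a, c.disjoint_cornerSquare_sidePiece a,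
    fun d hd => ((List.pairwise_cons.1 h.pairwise).1 d hd).mono_left (interior_mono hsq)⟩

lemma exists_next (h : IsStripFamily F a A ℓ L) (ha : 0 < a) (hℓ : ℓ ≠ 0) (hA : a * ℓ ≤ A)
    (hb : b ≤ a) :
    ∃ (x y : ℝ) (L' : List Strip), IsStripFamily F b (A - a ^ 2) (ℓ + a) L' ∧
      rect x y a a ⊆ F ∧ interior (rect x y a a) ⊆ openUnion L ∧
      Disjoint (interior (rect x y a a)) (openUnion L') ∧ openUnion L' ⊆ openUnion L := by
  obtain ⟨c, hc, hw⟩ := h.exists_le_width ha hℓ hA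
  obtain ⟨M, hM⟩ : ∃ M, L.Perm (c :: M) := by
    obtain ⟨l₁, l₂, rfl⟩ := List.append_of_mem hc
    exact ⟨l₁ ++ l₂, List.perm_middle⟩
  have hcM := h.perm hM
  have hsq := c.cornerSquare_subset (h.le_length c hc) hw
  rw [openUnion_perm hM]
  refine ⟨c.x, c.y, c.endPiece a :: c.sidePiece a :: M, hcM.cut ha.le hw hb,
    hsq.trans (h.subset c hc), ?_, hcM.disjoint_cornerSquare_openUnion hw,
    openUnion_cut_subset ha.le hw⟩
  rw [openUnion_cons]
  exact (interior_mono hsq).trans subset_union_left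

end IsStripFamily

lemma pairwise_disjoint_of_antitone {α : Type*} {Q U : ℕ → Set α} (hU : Antitone U)
    (hQ : ∀ n, Q n ⊆ U n) (hQU : ∀ n, Disjoint (Q n) (U (n + 1))) : Pairwise (Disjoint on Q) :=
  (pairwise_disjoint_on Q).2 fun m n hmn => (hQU m).mono_right ((hQ n).trans (hU hmn))

theorem exists_packing_of_mul_le {s : ℕ → ℝ} {a b : ℝ} (hs : ∀ n, 0 < s n) (hanti : Antitone s)
    (hb : s 0 ≤ b)
    (hA : ∀ n, s n * (b + ∑ k ∈ Finset.range n, s k) ≤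
      a * b - ∑ k ∈ Finset.range n, s k ^ 2) :
    ∃ x y : ℕ → ℝ, (∀ n, rect (x n) (y n) (s n) (s n) ⊆ rect 0 0 a b) ∧
      Pairwise (Disjoint on fun n => interior (rect (x n) (y n) (s n) (s n))) := by
  have hℓ (n : ℕ) : b + ∑ k ∈ Finset.range n, s k ≠ 0 :=
    (add_pos_of_pos_of_nonneg ((hs 0).trans_le hb) (Finset.sum_nonneg fun k _ => (hs k).le)).ne'
  choose! x y next hnext hsub hmem hdisj hanti' using fun n L
    (hL : IsStripFamily (rect 0 0 a b) (s n) (a * b - ∑ k ∈ Finset.range n, s k ^ 2)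
      (b + ∑ k ∈ Finset.range n, s k) L) =>
    hL.exists_next (hs n) (hℓ n) (hA n) (hanti n.le_succ)
  let L : ℕ → List Strip := fun n => Nat.rec [⟨0, 0, b, a, false⟩] next n
  have hL (n : ℕ) : IsStripFamily (rect 0 0 a b) (s n)
      (a * b - ∑ k ∈ Finset.range n, s k ^ 2) (b + ∑ k ∈ Finset.range n, s k) (L n) := by
    induction n with
    | zero => constructor <;> simp [L, Strip.toSet, hb]
    | succ n ih =>
      simpa only [Finset.sum_range_succ, sub_sub, add_assoc] using hnext n (L n) ih
  have hU : Antitone fun n => openUnion (L n) :=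
    antitone_nat_of_succ_le fun n => hanti' n (L n) (hL n)
  exact ⟨fun n => x n (L n), fun n => y n (L n), fun n => hsub n (L n) (hL n),
    pairwise_disjoint_of_antitone hU (fun n => hmem n (L n) (hL n))
      fun n => hdisj n (L n) (hL n)⟩

lemma antitoneOn_rpow_neg {t : ℝ} (ht : 0 ≤ t) : AntitoneOn (fun x : ℝ => x ^ (-t)) (Ioi 0) :=
  fun _ hx _ _ hxy => Real.rpow_le_rpow_of_nonpos hx hxy (neg_nonpos.2 ht)

lemma sum_range_succ_rpow_neg_le {t : ℝ} (ht₀ : 0 ≤ t) (ht₁ : t < 1) (n : ℕ) :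
    ∑ k ∈ Finset.range (n + 1), ((k : ℝ) + 1) ^ (-t) ≤
      (((n : ℝ) + 1) ^ (1 - t) - t) / (1 - t) := by
  have hanti : AntitoneOn (fun x : ℝ => x ^ (-t)) (Icc 1 (1 + n)) :=
    (antitoneOn_rpow_neg ht₀).mono fun x hx => zero_lt_one.trans_le hx.1
  have hint : ∫ x in (1 : ℝ)..1 + n, x ^ (-t) = (((n : ℝ) + 1) ^ (1 - t) - 1) / (1 - t) := by
    rw [integral_rpow (.inl (by linarith)), Real.one_rpow, neg_add_eq_sub, add_comm (1 : ℝ) n]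
  have hne : 1 - t ≠ 0 := by linarith
  calc ∑ k ∈ Finset.range (n + 1), ((k : ℝ) + 1) ^ (-t)
      = ∑ k ∈ Finset.range n, (1 + ((k + 1 : ℕ) : ℝ)) ^ (-t) + 1 := by
        simp [Finset.sum_range_succ', add_comm]
    _ ≤ (((n : ℝ) + 1) ^ (1 - t) - 1) / (1 - t) + 1 := by
        grw [hanti.sum_le_integral, hint]
    _ = (((n : ℝ) + 1) ^ (1 - t) - t) / (1 - t) := by
        field_simp
        ring

lemma rpow_div_le_zetaR_sub_sum {σ : ℝ} (hσ : 1 < σ) (n : ℕ) :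
    ((n : ℝ) + 1) ^ (1 - σ) / (σ - 1) ≤
      zetaR σ - ∑ k ∈ Finset.range n, ((k : ℝ) + 1) ^ (-σ) := by
  have hanti : AntitoneOn (fun x : ℝ => x ^ (-σ)) (Ici ((n + 1 : ℕ) : ℝ)) :=
    (antitoneOn_rpow_neg (by linarith)).mono (Ici_subset_Ioi.2 (by positivity))
  have hsum : Summable fun k : ℕ => (k : ℝ) ^ (-σ) := Real.summable_nat_rpow.2 (by linarith)
  have hzeta : zetaR σ = ∑' k : ℕ, ((k + 1 : ℕ) : ℝ) ^ (-σ) :=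
    tsum_pnat_eq_tsum_succ (f := fun k : ℕ => (k : ℝ) ^ (-σ))
  calc ((n : ℝ) + 1) ^ (1 - σ) / (σ - 1)
      = ∫ x in Ioi ((n + 1 : ℕ) : ℝ), x ^ (-σ) := by
        rw [integral_Ioi_rpow_of_lt (by linarith) (by positivity), ← neg_div_neg_eq]
        push_cast
        ring_nf
    _ ≤ ∑' k : ℕ, ((k + (n + 1) : ℕ) : ℝ) ^ (-σ) :=
        hanti.integral_le_tsum_comp_add _ hsum fun x hx =>
          Real.rpow_nonneg ((Nat.cast_nonneg _).trans (le_of_lt hx)) _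
    _ = zetaR σ - ∑ k ∈ Finset.range n, ((k : ℝ) + 1) ^ (-σ) := by
        rw [hzeta, ← ((summable_nat_add_iff 1).2 hsum).sum_add_tsum_nat_add n]
        simp [add_assoc]

lemma rpow_neg_mul_one_add_sum_le {t : ℝ} (ht : 1 / 2 < t) (ht' : t ≤ 2 / 3) (n : ℕ) :
    ((n : ℝ) + 1) ^ (-t) * (1 + ∑ k ∈ Finset.range n, ((k : ℝ) + 1) ^ (-t)) ≤
      zetaR (2 * t) - ∑ k ∈ Finset.range n, (((k : ℝ) + 1) ^ (-t)) ^ 2 := by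
  have hsq (k : ℕ) : (((k : ℝ) + 1) ^ (-t)) ^ 2 = ((k : ℝ) + 1) ^ (-(2 * t)) := by
    rw [← Real.rpow_mul_natCast (by positivity)]
    ring_nf
  have hlength : 1 + ∑ k ∈ Finset.range n, ((k : ℝ) + 1) ^ (-t) ≤
      ((n : ℝ) + 1) ^ (1 - t) / (1 - t) := by
    have hsum := sum_range_succ_rpow_neg_le (t := t) (by linarith) (by linarith) n
    have hlast : 0 ≤ ((n : ℝ) + 1) ^ (-t) := by positivity
    have hone : 1 ≤ t / (1 - t) := (one_le_div (by linarith)).2 (by linarith)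
    rw [Finset.sum_range_succ, sub_div] at hsum
    linarith
  simp only [hsq]
  calc ((n : ℝ) + 1) ^ (-t) * (1 + ∑ k ∈ Finset.range n, ((k : ℝ) + 1) ^ (-t))
      ≤ ((n : ℝ) + 1) ^ (-t) * (((n : ℝ) + 1) ^ (1 - t) / (1 - t)) := by gcongr
    _ = ((n : ℝ) + 1) ^ (1 - 2 * t) / (1 - t) := by
        rw [← mul_div_assoc, ← Real.rpow_add (by positivity)]
        ring_nf
    _ ≤ ((n : ℝ) + 1) ^ (1 - 2 * t) / (2 * t - 1) := by
        exact div_le_div_of_nonneg_left (by positivity) (by linarith) (by linarith)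
    _ ≤ _ := rpow_div_le_zetaR_sub_sum (by linarith) n

end SquarePacking

open SquarePacking Set Function in
theorem perfect_packing_two_thirds_general {t : ℝ} (ht : 1 / 2 < t) (ht' : t ≤ 2 / 3) :
    ∃ x y : ℕ+ → ℝ,
      (∀ n : ℕ+,
        Set.Icc (x n) (x n + (n : ℝ) ^ (-t)) ×ˢ Set.Icc (y n) (y n + (n : ℝ) ^ (-t)) ⊆
          Set.Icc (0 : ℝ) (zetaR (2 * t)) ×ˢ Set.Icc (0 : ℝ) 1) ∧
      (∀ m n : ℕ+, m ≠ n →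
        Disjoint
          (Set.Ioo (x m) (x m + (m : ℝ) ^ (-t)) ×ˢ Set.Ioo (y m) (y m + (m : ℝ) ^ (-t)))
          (Set.Ioo (x n) (x n + (n : ℝ) ^ (-t)) ×ˢ Set.Ioo (y n) (y n + (n : ℝ) ^ (-t)))) := by
  have hanti : Antitone fun n : ℕ => ((n : ℝ) + 1) ^ (-t) := fun m n hmn =>
    antitoneOn_rpow_neg (by linarith) (mem_Ioi.2 (by positivity)) (mem_Ioi.2 (by positivity))
      (by gcongr)
  obtain ⟨x, y, hsub, hdisj⟩ := exists_packing_of_mul_le (a := zetaR (2 * t)) (b := 1)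
    (fun n => by positivity) hanti (by simp)
    (by simpa only [mul_one] using rpow_neg_mul_one_add_sum_le ht ht')
  have hcast (n : ℕ+) : (n.natPred : ℝ) + 1 = n := mod_cast n.natPred_add_one
  refine ⟨fun n => x n.natPred, fun n => y n.natPred, fun n => ?_, fun m n hmn => ?_⟩
  · simpa only [rect, hcast, zero_add] using hsub n.natPred
  · simpa only [onFun, interior_rect, hcast] using hdisj (PNat.natPred_injective.ne hmn)

/-- For `t = 2/3`, the squares of side `n^{-t}` (`n ≥ 1`) can be packed perfectly into
the rectangle `[0, ζ(4/3)] × [0, 1]`. -/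
theorem perfect_packing_two_thirds :
    ∃ x y : ℕ+ → ℝ,
      (∀ n : ℕ+,
        Set.Icc (x n) (x n + (n : ℝ) ^ (-(2 / 3 : ℝ))) ×ˢ
            Set.Icc (y n) (y n + (n : ℝ) ^ (-(2 / 3 : ℝ))) ⊆
          Set.Icc (0 : ℝ) (zetaR (4 / 3)) ×ˢ Set.Icc (0 : ℝ) 1) ∧
      (∀ m n : ℕ+, m ≠ n →
        Disjoint
          (Set.Ioo (x m) (x m + (m : ℝ) ^ (-(2 / 3 : ℝ))) ×ˢ
            Set.Ioo (y m) (y m + (m : ℝ) ^ (-(2 / 3 : ℝ))))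
          (Set.Ioo (x n) (x n + (n : ℝ) ^ (-(2 / 3 : ℝ))) ×ˢ
            Set.Ioo (y n) (y n + (n : ℝ) ^ (-(2 / 3 : ℝ))))) := by
  have h := perfect_packing_two_thirds_general (t := 2 / 3) (by norm_num) le_rfl
  rwa [show (2 : ℝ) * (2 / 3) = 4 / 3 by norm_num] at h
end

section
/- For t = 2/3, the squares S^t_n of side length n^{-t} for n = 1, 2, 3, ... can be packed perfectly into a square of side length √(ζ(4/3)). That is, there exist positions (x_n, y_n) ∈ ℝ² for each positive integer n such that each axis-parallel square [x_n, x_n + n^{-2/3}] × [y_n, y_n + n^{-2/3}] is contained in the square [0, √(ζ(4/3))] × [0, √(ζ(4/3))], and the interiors of distinct squares are pairwise disjoint. -/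
/-!
The squares are placed greedily. The free region is kept cut into finitely many rectangles, and
each rectangle carries a potential relative to the next side `s`: its shorter side if a square of
side `s` fits into it, its longer side otherwise. A rectangle into which no such square fits has
area at most `s` times its potential, so as long as the free area exceeds `s` times the total
potential the next square can be placed. Placing it in a corner of a rectangle and cutting the
remaining L-shape along the shorter side raises the total potential by at most `s`. Hence squares
of decreasing sides `s 0, s 1, …` pack into a square of side `a` as soon as
`s n * (a + ∑ k < n, s k) < a ^ 2 - ∑ k < n, s k ^ 2` for all `n`.

For `s k = (k + 1) ^ (-t)` and `a ^ 2 = ζ (2 t)`, comparison with integrals separates the two sides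
by `(n + 1) ^ (1 - 2 t) / (2 t - 1)`. The left comparison needs `1 / (1 - t) ≤ 1 / (2 t - 1)`, that
is `t ≤ 2 / 3`, and the same condition gives the bound on `a` needed there.
-/

section Dissection

open Set

/-- The half-open rectangle of width `w` and height `h` with lower left corner `(x, y)`. Half-open
rectangles are cut into half-open rectangles that are genuinely disjoint as sets. -/
def icoRect (x y w h : ℝ) : Set (ℝ × ℝ) := Ico x (x + w) ×ˢ Ico y (y + h)

/-- The potential of a `w × h` rectangle relative to a side `s`: the shorter side if a square of
side `s` fits into the rectangle, the longer side otherwise. It controls when a square of side `s`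
is guaranteed to fit somewhere into a dissected region. -/
noncomputable def sidePotential (s w h : ℝ) : ℝ :=
  if s ≤ min w h then min w h else max w h

/-- `Dissected s U A P` says that the region `U` is a disjoint union of finitely many half-open
rectangles of total area `A` whose potentials relative to `s` add up to at most `P`. It is the
invariant of the greedy packing, with `U` the region still free. -/
inductive Dissected (s : ℝ) : Set (ℝ × ℝ) → ℝ → ℝ → Prop
  | empty {P : ℝ} (hP : 0 ≤ P) : Dissected s ∅ 0 P
  | rect_union {x y w h A P : ℝ} {U : Set (ℝ × ℝ)} (hw : 0 ≤ w) (hh : 0 ≤ h)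
      (hdisj : Disjoint (icoRect x y w h) U) (hU : Dissected s U A P) :
      Dissected s (icoRect x y w h ∪ U) (w * h + A) (sidePotential s w h + P)

variable {s t x y w h A P : ℝ} {U : Set (ℝ × ℝ)}

theorem mem_icoRect {p : ℝ × ℝ} :
    p ∈ icoRect x y w h ↔ (x ≤ p.1 ∧ p.1 < x + w) ∧ y ≤ p.2 ∧ p.2 < y + h :=
  Iff.rfl

theorem icoRect_subset_icoRect {w' h' : ℝ} (hw : w ≤ w') (hh : h ≤ h') :
    icoRect x y w h ⊆ icoRect x y w' h' :=
  prod_mono (Ico_subset_Ico_right (by gcongr)) (Ico_subset_Ico_right (by gcongr))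

theorem Icc_prod_Icc_subset_of_icoRect_subset {x' y' w' h' : ℝ} (hw : 0 < w) (hh : 0 < h)
    (hsub : icoRect x y w h ⊆ icoRect x' y' w' h') :
    Icc x (x + w) ×ˢ Icc y (y + h) ⊆ Icc x' (x' + w') ×ˢ Icc y' (y' + h') := by
  have hx : x < x + w := lt_add_of_pos_right x hw
  have hy : y < y + h := lt_add_of_pos_right y hh
  obtain ⟨hX, hY⟩ :=
    (prod_subset_prod_iff' ((nonempty_Ico.2 hx).prod (nonempty_Ico.2 hy))).1 hsub
  rw [Ico_subset_Ico_iff hx] at hX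
  rw [Ico_subset_Ico_iff hy] at hY
  exact prod_mono (Icc_subset_Icc hX.1 hX.2) (Icc_subset_Icc hY.1 hY.2)

theorem icoRect_sdiff_square (hs : 0 < s) (hh : s ≤ h) :
    icoRect x y w h \ icoRect x y s s =
      icoRect x (y + s) w (h - s) ∪ icoRect (x + s) y (w - s) s := by
  ext p
  simp only [mem_sdiff, mem_union, mem_icoRect]
  grind

theorem disjoint_icoRect_top_right :
    Disjoint (icoRect x (y + s) w (h - s)) (icoRect (x + s) y (w - s) s) := by
  rw [disjoint_left]
  intro p htop hright
  exact htop.2.1.not_gt hright.2.2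

theorem preimage_swap_icoRect (x y w h : ℝ) :
    Prod.swap ⁻¹' icoRect x y w h = icoRect y x h w :=
  preimage_swap_prod _ _

theorem sidePotential_comm (s w h : ℝ) : sidePotential s w h = sidePotential s h w := by
  simp only [sidePotential, min_comm w, max_comm w]

theorem sidePotential_le_of_le (hst : s ≤ t) : sidePotential s w h ≤ sidePotential t w h := by
  have := min_le_max (a := w) (b := h)
  simp only [sidePotential]
  split_ifs <;> linarith

theorem mul_le_mul_sidePotential_of_not_le (hw : 0 ≤ w) (hs : ¬ s ≤ min w h) :
    w * h ≤ s * sidePotential s w h := by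
  rw [sidePotential, if_neg hs, ← min_mul_max]
  exact mul_le_mul_of_nonneg_right (not_le.1 hs).le (le_max_of_le_left hw)

theorem sidePotential_cut_le (hw : s ≤ w) (hwh : w ≤ h) :
    sidePotential s w (h - s) + sidePotential s (w - s) s ≤ sidePotential s w h + s := by
  have hlong : sidePotential s w (h - s) ≤ w := by
    grind [sidePotential]
  have hstrip : sidePotential s (w - s) s = s := by
    grind [sidePotential]
  have hwhole : sidePotential s w h = w := by
    grind [sidePotential]
  linarith

namespace Dissected

theorem mono {P' : ℝ} (hU : Dissected s U A P) (hts : t ≤ s) (hP : P ≤ P') :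
    Dissected t U A P' := by
  induction hU generalizing P' with
  | empty h0 => exact empty (h0.trans hP)
  | @rect_union x y w h A P U hw hh hdisj _ ih =>
    have hpot := sidePotential_le_of_le (w := w) (h := h) hts
    have hU : Dissected t U A (P' - sidePotential t w h) := ih (by linarith)
    simpa only [add_sub_cancel] using rect_union hw hh hdisj hU

theorem preimage_swap (hU : Dissected s U A P) : Dissected s (Prod.swap ⁻¹' U) A P := by
  induction hU with
  | empty hP => exact empty hP
  | @rect_union x y w h A P U hw hh hdisj _ ih =>
    have hdisj' := hdisj.preimage Prod.swap
    rw [preimage_swap_icoRect] at hdisj'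
    rw [preimage_union, preimage_swap_icoRect, mul_comm w, sidePotential_comm]
    exact rect_union hh hw hdisj' ih

/-- The L-shape left by the square is cut along the shorter side `w`: the piece of width `w` has
potential at most `w`, that of the whole rectangle, and the strip beside the square has potential
`s`. -/
theorem icoRect_sdiff_square_union_of_le (hU : Dissected s U A P) (hs : 0 < s) (hw : s ≤ w)
    (hwh : w ≤ h) (hdisj : Disjoint (icoRect x y w h) U) :
    Dissected s ((icoRect x y w h \ icoRect x y s s) ∪ U) (w * h - s ^ 2 + A)
      (sidePotential s w h + P + s) := by
  have hh : s ≤ h := hw.trans hwh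
  have hrest := hdisj.mono_left (sdiff_subset (t := icoRect x y s s))
  rw [icoRect_sdiff_square hs hh] at hrest ⊢
  rw [disjoint_union_left] at hrest
  have hcut := rect_union (hs.le.trans hw) (sub_nonneg.2 hh)
    (disjoint_union_right.2 ⟨disjoint_icoRect_top_right, hrest.1⟩)
    (rect_union (sub_nonneg.2 hw) hs.le hrest.2 hU)
  rw [← union_assoc] at hcut
  convert hcut.mono le_rfl ?_ using 1
  · ring
  · linarith [sidePotential_cut_le hw hwh]

theorem icoRect_sdiff_square_union (hU : Dissected s U A P) (hs : 0 < s) (hw : s ≤ w)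
    (hh : s ≤ h) (hdisj : Disjoint (icoRect x y w h) U) :
    Dissected s ((icoRect x y w h \ icoRect x y s s) ∪ U) (w * h - s ^ 2 + A)
      (sidePotential s w h + P + s) := by
  rcases le_total w h with hwh | hhw
  · exact hU.icoRect_sdiff_square_union_of_le hs hw hwh hdisj
  · have hdisj' := hdisj.preimage Prod.swap
    rw [preimage_swap_icoRect] at hdisj'
    have hcut := (hU.preimage_swap.icoRect_sdiff_square_union_of_le hs hh hhw hdisj').preimage_swap
    rwa [preimage_union, preimage_sdiff, preimage_swap_icoRect, preimage_swap_icoRect,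
      preimage_preimage, mul_comm h, sidePotential_comm] at hcut

theorem exists_square_subset (hU : Dissected s U A P) (hs : 0 < s) (hlt : s * P < A) :
    ∃ x y, icoRect x y s s ⊆ U ∧
      Dissected s (U \ icoRect x y s s) (A - s ^ 2) (P + s) := by
  induction hU with
  | empty hP => exact absurd hlt (mul_nonneg hs.le hP).not_gt
  | @rect_union x y w h A P U hw hh hdisj hU ih =>
    by_cases hfit : s ≤ min w h
    · obtain ⟨hsw, hsh⟩ := le_min_iff.1 hfit
      have hQ : icoRect x y s s ⊆ icoRect x y w h := icoRect_subset_icoRect hsw hsh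
      refine ⟨x, y, hQ.trans subset_union_left, ?_⟩
      rw [union_sdiff_distrib, (hdisj.mono_left hQ).symm.sdiff_eq_left]
      convert hU.icoRect_sdiff_square_union hs hsw hsh hdisj using 1
      ring
    · obtain ⟨u, v, hQ, hrest⟩ := ih (by linarith [mul_le_mul_sidePotential_of_not_le hw hfit])
      refine ⟨u, v, hQ.trans subset_union_right, ?_⟩
      rw [union_sdiff_distrib, (hdisj.mono_right hQ).sdiff_eq_left]
      convert rect_union hw hh (hdisj.mono_right sdiff_subset) hrest using 1 <;> ring

end Dissected

/-- Squares with sides `s i` can be placed, with disjoint interiors, into the square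
`[0, a] × [0, a]`; here `(x i, y i)` is the lower left corner of the `i`-th square. -/
def SquaresPackInto {ι : Type*} (s : ι → ℝ) (a : ℝ) : Prop :=
  ∃ x y : ι → ℝ,
    (∀ i, Icc (x i) (x i + s i) ×ˢ Icc (y i) (y i + s i) ⊆ Icc 0 a ×ˢ Icc 0 a) ∧
    ∀ i j, i ≠ j →
      Disjoint (Ioo (x i) (x i + s i) ×ˢ Ioo (y i) (y i + s i))
        (Ioo (x j) (x j + s j) ×ˢ Ioo (y j) (y j + s j))

theorem SquaresPackInto.comp {ι κ : Type*} {s : ι → ℝ} {a : ℝ} (hs : SquaresPackInto s a)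
    {f : κ → ι} (hf : f.Injective) : SquaresPackInto (s ∘ f) a := by
  obtain ⟨x, y, hsub, hdisj⟩ := hs
  exact ⟨x ∘ f, y ∘ f, fun i => hsub (f i), fun i j hij => hdisj _ _ (hf.ne hij)⟩

theorem exists_greedy_placement {a : ℝ} {s : ℕ → ℝ} (ha : 0 ≤ a) (hpos : ∀ n, 0 < s n)
    (hanti : Antitone s)
    (hlt : ∀ n, s n * (a + ∑ k ∈ Finset.range n, s k) <
      a ^ 2 - ∑ k ∈ Finset.range n, s k ^ 2) :
    ∃ (x y : ℕ → ℝ) (U : ℕ → Set (ℝ × ℝ)), U 0 = icoRect 0 0 a a ∧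
      ∀ n, icoRect (x n) (y n) (s n) (s n) ⊆ U n ∧
        U (n + 1) = U n \ icoRect (x n) (y n) (s n) (s n) := by
  let Free (n : ℕ) : Type := {U : Set (ℝ × ℝ) //
    Dissected (s n) U (a ^ 2 - ∑ k ∈ Finset.range n, s k ^ 2) (a + ∑ k ∈ Finset.range n, s k)}
  have hinit : Dissected (s 0) (icoRect 0 0 a a) (a ^ 2 - ∑ k ∈ Finset.range 0, s k ^ 2)
      (a + ∑ k ∈ Finset.range 0, s k) := by
    simpa [sidePotential, sq] using
      Dissected.rect_union (s := s 0) ha ha (disjoint_empty (icoRect 0 0 a a))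
        (Dissected.empty le_rfl)
  have hstep : ∀ n (U : Free n), ∃ (x y : ℝ) (U' : Free (n + 1)),
      icoRect x y (s n) (s n) ⊆ U.1 ∧ U'.1 = U.1 \ icoRect x y (s n) (s n) := by
    rintro n ⟨U, hU⟩
    obtain ⟨x, y, hsub, hU'⟩ := hU.exists_square_subset (hpos n) (hlt n)
    refine ⟨x, y, ⟨U \ icoRect x y (s n) (s n), ?_⟩, hsub, rfl⟩
    rw [Finset.sum_range_succ, Finset.sum_range_succ, ← sub_sub, ← add_assoc]
    exact hU'.mono (hanti n.le_succ) le_rfl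
  choose x y next hsub hnext using hstep
  let U : (n : ℕ) → Free n := fun n => Nat.rec ⟨_, hinit⟩ next n
  exact ⟨fun n => x n (U n), fun n => y n (U n), fun n => (U n).1, rfl,
    fun n => ⟨hsub n (U n), hnext n (U n)⟩⟩

theorem squaresPackInto_of_mul_lt {a : ℝ} {s : ℕ → ℝ} (ha : 0 ≤ a) (hpos : ∀ n, 0 < s n)
    (hanti : Antitone s)
    (hlt : ∀ n, s n * (a + ∑ k ∈ Finset.range n, s k) <
      a ^ 2 - ∑ k ∈ Finset.range n, s k ^ 2) :
    SquaresPackInto s a := by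
  obtain ⟨x, y, U, hU₀, hU⟩ := exists_greedy_placement ha hpos hanti hlt
  have hUanti : Antitone U :=
    antitone_nat_of_succ_le fun n => (hU n).2.trans_subset sdiff_subset
  refine ⟨x, y, fun n => ?_, ?_⟩
  · have hbox := (hU n).1.trans ((hUanti n.zero_le).trans_eq hU₀)
    simpa only [zero_add] using Icc_prod_Icc_subset_of_icoRect_subset (hpos n) (hpos n) hbox
  · have hdisj : Pairwise (Function.onFun Disjoint
      fun n => icoRect (x n) (y n) (s n) (s n)) := by
      refine (pairwise_disjoint_on _).2 fun m n hmn => ?_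
      have hn : icoRect (x n) (y n) (s n) (s n) ⊆ U m \ icoRect (x m) (y m) (s m) (s m) :=
        (hU m).2 ▸ (hU n).1.trans (hUanti hmn)
      exact disjoint_sdiff_right.mono_right hn
    exact fun m n hmn => (hdisj hmn).mono
      (prod_mono Ioo_subset_Ico_self Ioo_subset_Ico_self)
      (prod_mono Ioo_subset_Ico_self Ioo_subset_Ico_self)

end Dissection

section ZetaBounds

open Finset Filter Topology

variable {p : ℝ}

theorem antitoneOn_rpow_neg_Icc {a b : ℝ} (ha : 0 < a) (hp : 0 ≤ p) :
    AntitoneOn (fun u : ℝ => u ^ (-p)) (Set.Icc a b) :=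
  (Real.antitoneOn_rpow_Ioi_of_exponent_nonpos (neg_nonpos.2 hp)).mono fun _ hu =>
    ha.trans_le hu.1

theorem integral_rpow_neg {a b : ℝ} (ha : 0 < a) (hab : a ≤ b) (hp : p ≠ 1) :
    ∫ u in a..b, u ^ (-p) = (b ^ (1 - p) - a ^ (1 - p)) / (1 - p) := by
  rw [integral_rpow (Or.inr ⟨fun h => hp (neg_injective h), ?_⟩), neg_add_eq_sub]
  exact Set.notMem_uIcc_of_lt ha (ha.trans_le hab)

theorem sum_range_succ_rpow_neg_le (hp₀ : 0 ≤ p) (hp₁ : p ≠ 1) (n : ℕ) :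
    ∑ k ∈ range (n + 1), ((k : ℝ) + 1) ^ (-p) ≤ (((n : ℝ) + 1) ^ (1 - p) - p) / (1 - p) := by
  have h1p : 1 - p ≠ 0 := sub_ne_zero.2 hp₁.symm
  calc ∑ k ∈ range (n + 1), ((k : ℝ) + 1) ^ (-p)
      = ∑ k ∈ range n, (1 + ((k + 1 : ℕ) : ℝ)) ^ (-p) + 1 := by
        simp [sum_range_succ', add_comm]
    _ ≤ (∫ u in (1 : ℝ)..1 + n, u ^ (-p)) + 1 := by
        gcongr
        exact (antitoneOn_rpow_neg_Icc one_pos hp₀).sum_le_integral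
    _ = (((n : ℝ) + 1) ^ (1 - p) - p) / (1 - p) := by
        rw [integral_rpow_neg one_pos (by simp) hp₁, Real.one_rpow, add_comm 1 (n : ℝ)]
        field_simp
        ring

theorem rpow_sub_rpow_div_le {a : ℝ} (ha : 0 < a) (hp₀ : 0 ≤ p) (hp₁ : p ≠ 1) :
    ((a + 1) ^ (1 - p) - a ^ (1 - p)) / (1 - p) ≤ a ^ (-p) := by
  have h := AntitoneOn.integral_le_sum (a := 1) (antitoneOn_rpow_neg_Icc ha hp₀)
  rw [integral_rpow_neg ha (by simp) hp₁] at h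
  simpa using h

theorem hasSum_zetaR (hp : 1 < p) : HasSum (fun k : ℕ => ((k : ℝ) + 1) ^ (-p)) (zetaR p) := by
  have hsum : Summable fun k : ℕ => ((k + 1 : ℕ) : ℝ) ^ (-p) :=
    (summable_nat_add_iff 1).2 (Real.summable_nat_rpow.2 (neg_lt_neg hp))
  rw [zetaR, tsum_pnat_eq_tsum_succ (f := fun n : ℕ => (n : ℝ) ^ (-p))]
  simpa only [Nat.cast_add_one] using hsum.hasSum

theorem tendsto_natCast_add_one_rpow_one_sub (hp : 1 < p) :
    Tendsto (fun n : ℕ => ((n : ℝ) + 1) ^ (1 - p)) atTop (𝓝 0) := by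
  rw [← neg_sub]
  exact (tendsto_rpow_neg_atTop (sub_pos.2 hp)).comp
    (tendsto_atTop_add_const_right _ 1 tendsto_natCast_atTop_atTop)

theorem zetaR_le (hp : 1 < p) : zetaR p ≤ p / (p - 1) := by
  refine le_of_tendsto' ((tendsto_add_atTop_iff_nat 1).2 (hasSum_zetaR hp).tendsto_sum_nat)
    fun n => (sum_range_succ_rpow_neg_le (zero_le_one.trans hp.le) hp.ne' n).trans ?_
  rw [← neg_div_neg_eq, neg_sub, neg_sub]
  exact div_le_div_of_nonneg_right (sub_le_self p (by positivity)) (sub_nonneg.2 hp.le)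

theorem sum_range_add_rpow_div_le_zetaR (hp : 1 < p) (n : ℕ) :
    ∑ k ∈ range n, ((k : ℝ) + 1) ^ (-p) + ((n : ℝ) + 1) ^ (1 - p) / (p - 1) ≤ zetaR p := by
  have hmono : Monotone fun n : ℕ =>
      ∑ k ∈ range n, ((k : ℝ) + 1) ^ (-p) + ((n : ℝ) + 1) ^ (1 - p) / (p - 1) := by
    refine monotone_nat_of_le_succ fun n => ?_
    have h := rpow_sub_rpow_div_le n.cast_add_one_pos (zero_le_one.trans hp.le) hp.ne'
    rw [← neg_div_neg_eq, neg_sub, neg_sub, sub_div] at h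
    rw [sum_range_succ, Nat.cast_add_one]
    linarith
  refine hmono.ge_of_tendsto ?_ n
  simpa only [zero_div, add_zero] using (hasSum_zetaR hp).tendsto_sum_nat.add
    ((tendsto_natCast_add_one_rpow_one_sub hp).div_const (p - 1))

theorem sqrt_zetaR_two_mul_le {t : ℝ} (ht : 1 / 2 < t) (ht' : t ≤ 2 / 3) :
    √(zetaR (2 * t)) ≤ 2 * (1 - t) / (2 * t - 1) := by
  have hpos : 0 < 2 * t - 1 := by linarith
  refine Real.sqrt_le_iff.2 ⟨div_nonneg (by linarith) hpos.le, ?_⟩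
  calc zetaR (2 * t) ≤ 2 * t / (2 * t - 1) := zetaR_le (by linarith)
    _ ≤ (2 * (1 - t) / (2 * t - 1)) ^ 2 := by
      rw [div_pow, div_le_div_iff₀ hpos (by positivity)]
      nlinarith [mul_nonneg hpos.le (by linarith : 0 ≤ 2 / 3 - t)]

theorem sqrt_zetaR_add_sum_range_lt {t : ℝ} (ht : 1 / 2 < t) (ht' : t ≤ 2 / 3) (n : ℕ) :
    √(zetaR (2 * t)) + ∑ k ∈ range n, ((k : ℝ) + 1) ^ (-t) <
      ((n : ℝ) + 1) ^ (1 - t) / (2 * t - 1) := by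
  have h2t : 0 < 2 * t - 1 := by linarith
  have h1t : 0 < 1 - t := by linarith
  have hsum := sum_range_succ_rpow_neg_le (p := t) (by linarith) (by linarith) n
  rw [sum_range_succ] at hsum
  have hside : 0 < ((n : ℝ) + 1) ^ (-t) := by positivity
  have hone : 1 ≤ ((n : ℝ) + 1) ^ (1 - t) := Real.one_le_rpow (by simp) h1t.le
  generalize ((n : ℝ) + 1) ^ (1 - t) = X at *
  calc √(zetaR (2 * t)) + ∑ k ∈ range n, ((k : ℝ) + 1) ^ (-t)
      < 2 * (1 - t) / (2 * t - 1) + (X - t) / (1 - t) := by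
        linarith [sqrt_zetaR_two_mul_le ht ht']
    _ = 1 / (2 * t - 1) + (X - 1) / (1 - t) := by
        field_simp
        ring
    _ ≤ 1 / (2 * t - 1) + (X - 1) / (2 * t - 1) := by
        have hle : 2 * t - 1 ≤ 1 - t := by linarith
        linarith [div_le_div_of_nonneg_left (sub_nonneg.2 hone) h2t hle]
    _ = X / (2 * t - 1) := by ring

theorem rpow_neg_mul_sqrt_zetaR_add_sum_range_lt {t : ℝ} (ht : 1 / 2 < t) (ht' : t ≤ 2 / 3)
    (n : ℕ) :
    ((n : ℝ) + 1) ^ (-t) * (√(zetaR (2 * t)) + ∑ k ∈ range n, ((k : ℝ) + 1) ^ (-t)) <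
      zetaR (2 * t) - ∑ k ∈ range n, ((k : ℝ) + 1) ^ (-(2 * t)) := by
  have hn : 0 < (n : ℝ) + 1 := n.cast_add_one_pos
  calc ((n : ℝ) + 1) ^ (-t) * (√(zetaR (2 * t)) + ∑ k ∈ range n, ((k : ℝ) + 1) ^ (-t))
      < ((n : ℝ) + 1) ^ (-t) * (((n : ℝ) + 1) ^ (1 - t) / (2 * t - 1)) := by
        gcongr
        exact sqrt_zetaR_add_sum_range_lt ht ht' n
    _ = ((n : ℝ) + 1) ^ (1 - 2 * t) / (2 * t - 1) := by
        rw [← mul_div_assoc, ← Real.rpow_add hn]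
        ring_nf
    _ ≤ _ := le_sub_iff_add_le'.2 (sum_range_add_rpow_div_le_zetaR (by linarith) n)

end ZetaBounds


theorem perfect_packing_square_two_thirds_general {t : ℝ} (ht : 1 / 2 < t) (ht' : t ≤ 2 / 3) :
    SquaresPackInto (fun n : ℕ+ => (n : ℝ) ^ (-t)) √(zetaR (2 * t)) := by
  have hzeta : 0 ≤ zetaR (2 * t) := tsum_nonneg fun n => by positivity
  have hpack : SquaresPackInto (fun n : ℕ => ((n : ℝ) + 1) ^ (-t)) √(zetaR (2 * t)) := by
    refine squaresPackInto_of_mul_lt (Real.sqrt_nonneg _) (fun n => by positivity)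
      (fun m n hmn => ?_) fun n => ?_
    · exact Real.rpow_le_rpow_of_nonpos m.cast_add_one_pos (by gcongr) (by linarith)
    · have hsq : ∀ k : ℕ, (((k : ℝ) + 1) ^ (-t)) ^ 2 = ((k : ℝ) + 1) ^ (-(2 * t)) := fun k => by
        rw [← Real.rpow_mul_natCast (by positivity), Nat.cast_two, neg_mul, mul_comm t]
      simpa only [hsq, Real.sq_sqrt hzeta] using
        rpow_neg_mul_sqrt_zetaR_add_sum_range_lt ht ht' n
  convert hpack.comp PNat.natPred_injective using 2 with n
  rw [Function.comp_apply, ← Nat.cast_add_one, PNat.natPred_add_one]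

/-- For `t = 2/3`, the squares of side `n^{-t}` (`n ≥ 1`) can be packed perfectly into
the square `[0, √(ζ(4/3))] × [0, √(ζ(4/3))]`. -/
theorem perfect_packing_square_two_thirds :
    ∃ x y : ℕ+ → ℝ,
      (∀ n : ℕ+,
        Set.Icc (x n) (x n + (n : ℝ) ^ (-(2 / 3 : ℝ))) ×ˢ
            Set.Icc (y n) (y n + (n : ℝ) ^ (-(2 / 3 : ℝ))) ⊆
          Set.Icc (0 : ℝ) (Real.sqrt (zetaR (4 / 3))) ×ˢ
            Set.Icc (0 : ℝ) (Real.sqrt (zetaR (4 / 3)))) ∧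
      (∀ m n : ℕ+, m ≠ n →
        Disjoint
          (Set.Ioo (x m) (x m + (m : ℝ) ^ (-(2 / 3 : ℝ))) ×ˢ
            Set.Ioo (y m) (y m + (m : ℝ) ^ (-(2 / 3 : ℝ))))
          (Set.Ioo (x n) (x n + (n : ℝ) ^ (-(2 / 3 : ℝ))) ×ˢ
            Set.Ioo (y n) (y n + (n : ℝ) ^ (-(2 / 3 : ℝ))))) := by
  simpa only [SquaresPackInto, show (2 : ℝ) * (2 / 3) = 4 / 3 by norm_num] using
    perfect_packing_square_two_thirds_general (t := 2 / 3) (by norm_num) le_rfl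
end
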